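/- arXiv:1603.05457 — 4 statements merged into one kernel-verified Lean document; each statement's English description precedes it below -/
import Mathlib

section
/- Let X be a metric space, let f_n : X → X for n ≥ 0, and let k be a positive integer such that f_i is continuous on X for each 0 ≤ i ≤ k−1. If the non-autonomous system x_{n+1} = f_n(x_n) (n ≥ 0) is sensitive at a point x_0 ∈ X with sensitivity constant δ > 0, then the shifted system x_{n+1} = f_n(x_n) (n ≥ k) is sensitive at the point x_k = f_0^k(x_0) with the same sensitivity constant δ; that is, for any neighborhood V of x_k there exist z_0 ∈ V and a positive integer m such that d(f_k^m(z_0), f_k^m(x_k)) > δ, where f_k^m := f_{k+m−1} ∘ ⋯ ∘ f_k. -/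
open Filter Topology

/-- Iterates of a non-autonomous system: `iterSeq f n = f_{n-1} ∘ ⋯ ∘ f_0`. -/
def iterSeq {X : Type*} (f : ℕ → X → X) : ℕ → X → X
  | 0 => id
  | n + 1 => f n ∘ iterSeq f n

/-!
By continuity, orbits that start close enough to `x_0` stay within `δ` of the orbit of `x_0` up to
time `k`. Sensitivity at `x_0` can therefore only be witnessed at times `N > k`, and such a witness
`y` becomes, after `k` steps, a witness for the shifted system at time `N - k`.
-/

/-- Sensitivity of the system `x_{n+1} = f_n(x_n)` at the point `x` with sensitivity constant `δ`.
The requirement `0 < δ` is not part of the definition. -/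
def IsSensitiveAt {X : Type*} [PseudoMetricSpace X] (f : ℕ → X → X) (x : X) (δ : ℝ) : Prop :=
  ∀ U ∈ 𝓝 x, ∃ y ∈ U, ∃ N : ℕ, 0 < N ∧ δ < dist (iterSeq f N y) (iterSeq f N x)

theorem iterSeq_add_apply {X : Type*} (f : ℕ → X → X) (k m : ℕ) (x : X) :
    iterSeq f (k + m) x = iterSeq (fun n => f (k + n)) m (iterSeq f k x) := by
  induction m with
  | zero => rfl
  | succ m ih => exact congrArg (f (k + m)) ih

theorem continuousAt_iterSeq {X : Type*} [TopologicalSpace X] {f : ℕ → X → X} {k : ℕ} {x : X}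
    (hf : ∀ i < k, ContinuousAt (f i) (iterSeq f i x)) : ContinuousAt (iterSeq f k) x := by
  induction k with
  | zero => exact continuousAt_id
  | succ k ih => exact (hf k k.lt_succ_self).comp (ih fun i hi => hf i (hi.trans k.lt_succ_self))

section PseudoMetricSpace

variable {X : Type*} [PseudoMetricSpace X] {f : ℕ → X → X} {k : ℕ} {x : X} {δ : ℝ}

theorem eventually_forall_le_dist_iterSeq_lt
    (hf : ∀ i < k, ContinuousAt (f i) (iterSeq f i x)) (hδ : 0 < δ) :
    ∀ᶠ y in 𝓝 x, ∀ j ≤ k, dist (iterSeq f j y) (iterSeq f j x) < δ :=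
  (eventually_all_finite (Set.finite_Iic k)).2 fun _ hj =>
    (continuousAt_iterSeq fun i hi => hf i (hi.trans_le hj)).eventually
      (Metric.ball_mem_nhds _ hδ)

theorem IsSensitiveAt.exists_lt_time (hsens : IsSensitiveAt f x δ) (hδ : 0 < δ)
    (hf : ∀ i < k, ContinuousAt (f i) (iterSeq f i x)) {U : Set X} (hU : U ∈ 𝓝 x) :
    ∃ y ∈ U, ∃ N, k < N ∧ δ < dist (iterSeq f N y) (iterSeq f N x) := by
  obtain ⟨y, ⟨hyU, hclose⟩, N, -, hfar⟩ :=
    hsens _ (inter_mem hU (eventually_forall_le_dist_iterSeq_lt hf hδ))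
  exact ⟨y, hyU, N, lt_of_not_ge fun hNk => hfar.not_gt (hclose N hNk), hfar⟩

theorem shifted_system_sensitive_general (hf : ∀ i < k, ContinuousAt (f i) (iterSeq f i x))
    (hδ : 0 < δ) (hsens : IsSensitiveAt f x δ) :
    IsSensitiveAt (fun n => f (k + n)) (iterSeq f k x) δ := by
  intro V hV
  obtain ⟨y, hyV, N, hkN, hfar⟩ := hsens.exists_lt_time hδ hf (continuousAt_iterSeq hf hV)
  obtain ⟨m, hm, rfl⟩ := exists_pos_add_of_lt' hkN
  refine ⟨iterSeq f k y, hyV, m, hm, ?_⟩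
  simpa only [iterSeq_add_apply] using hfar

end PseudoMetricSpace

/-- If the system `x_{n+1} = f_n(x_n)` (n ≥ 0) is sensitive at `x0` with sensitivity
constant `δ`, and `f_0, …, f_{k-1}` are continuous, then the shifted system
`x_{n+1} = f_n(x_n)` (n ≥ k) is sensitive at `x_k = f_0^k(x0)` with the same constant. -/
theorem shifted_system_sensitive {X : Type*} [MetricSpace X] (f : ℕ → X → X)
    (k : ℕ) (hk : 0 < k) (hcont : ∀ i, i ≤ k - 1 → Continuous (f i))
    (x0 : X) (δ : ℝ) (hδ : 0 < δ)
    (hsens : ∀ U ∈ 𝓝 x0, ∃ y0 ∈ U, ∃ N : ℕ, 0 < N ∧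
      δ < dist (iterSeq f N y0) (iterSeq f N x0)) :
    ∀ V ∈ 𝓝 (iterSeq f k x0), ∃ z0 ∈ V, ∃ m : ℕ, 0 < m ∧
      δ < dist (iterSeq (fun n => f (k + n)) m z0)
            (iterSeq (fun n => f (k + n)) m (iterSeq f k x0)) :=
  shifted_system_sensitive_general (fun i hi => (hcont i (Nat.le_sub_one_of_lt hi)).continuousAt)
    hδ hsens
end

section
/- Let I be a non-degenerate interval, let f_n : I → I be a C¹ map for each n ≥ 0, let x_0 ∈ I, and let {x_n} be the orbit of the system x_{n+1} = f_n(x_n) starting from x_0. Assume that the sequence of derivatives {f_n′}_{n=0}^∞ is equi-continuous in I and that M := inf{ |f_n′(x_k)| : n, k ≥ 0 } > 0. If the Lyapunov exponent λ(x_0) = limsup_{n→∞} (1/n) Σ_{k=0}^{n−1} ln|f_k′(x_k)| is positive, then the system is strongly sensitive at x_0; that is, there exist δ > 0 and a neighborhood U of x_0 such that for every y_0 ∈ U with y_0 ≠ x_0 there is a positive integer N with |f_0^N(y_0) − f_0^N(x_0)| > δ. -/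
open Filter Topology

/-- The Lyapunov exponent `λ(x0) := limsup (1/n) ∑_{k<n} ln|f_k'(x_k)|` (in the
extended reals), where `x_k = f_0^k(x0)` is the orbit of `x0`. -/
noncomputable def lyapExp (f f' : ℕ → ℝ → ℝ) (x0 : ℝ) : EReal :=
  Filter.limsup (fun n : ℕ => ((1 / (n:ℝ)) * ∑ k ∈ Finset.range n,
    Real.log |f' k (iterSeq f k x0)| : EReal)) Filter.atTop

/-!
If an orbit through `y` stays within a small `δ` of the orbit of `x0`, equi-continuity keeps the
derivative of `f n` along the segment between the two `n`-th points so close to its value at the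
orbit of `x0` that, thanks to the lower bound `M`, each step still expands distances by `θ` times
the expansion rate of that derivative, for any prescribed `θ < 1`. A positive exponent makes the
products of these rates unbounded even after this loss, provided `θ` is close enough to `1`, so the
two orbits cannot stay `δ`-close.
-/

/-- Strong sensitivity at `x` of the non-autonomous system `f` acting on `s`: every other point of
`s` near `x` is eventually separated from `x` by a uniform distance. Neighbours are taken in `s`
only, so the notion is vacuous when `x` is isolated in `s`. -/
def StronglySensitiveWithinAt {X : Type*} [PseudoMetricSpace X] (f : ℕ → X → X) (s : Set X)
    (x : X) : Prop :=
  ∃ δ > (0 : ℝ), ∃ U ∈ 𝓝 x, ∀ y ∈ U, y ∈ s → y ≠ x →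
    ∃ N : ℕ, 0 < N ∧ δ < dist (iterSeq f N y) (iterSeq f N x)

/-- The exponential growth rate `limsup (1/n) ∑_{k<n} ln(a k)` of the partial products of `a`,
in the extended reals. The Lyapunov exponent is the case `a k = |f_k'(x_k)|`. -/
noncomputable def growthExponent (a : ℕ → ℝ) : EReal :=
  limsup (fun n : ℕ => ((1 / (n : ℝ)) * ∑ k ∈ Finset.range n, Real.log (a k) : EReal)) atTop

lemma prod_range_mul_le_of_mul_le_succ {R : Type*} [CommSemiring R] [PartialOrder R]
    [IsOrderedRing R] {b u : ℕ → R} (hb : ∀ n, 0 ≤ b n) (hu : ∀ n, b n * u n ≤ u (n + 1))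
    (n : ℕ) : (∏ k ∈ Finset.range n, b k) * u 0 ≤ u n := by
  induction n with
  | zero => simp
  | succ n ih =>
    calc (∏ k ∈ Finset.range (n + 1), b k) * u 0
        = b n * ((∏ k ∈ Finset.range n, b k) * u 0) := by rw [Finset.prod_range_succ]; ring
      _ ≤ b n * u n := mul_le_mul_of_nonneg_left ih (hb n)
      _ ≤ u (n + 1) := hu n

lemma frequently_mul_lt_sum_log_of_lt_growthExponent {a : ℕ → ℝ} {c : ℝ}
    (hc : c < growthExponent a) :
    ∃ᶠ n : ℕ in atTop, c * n < ∑ k ∈ Finset.range n, Real.log (a k) := by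
  refine ((frequently_lt_of_lt_limsup (by isBoundedDefault) hc).and_eventually
    (eventually_gt_atTop 0)).mono ?_
  rintro n ⟨hlt, hn⟩
  have hmean : c < (1 / (n : ℝ)) * ∑ k ∈ Finset.range n, Real.log (a k) := by
    rw [← EReal.coe_lt_coe_iff]
    push_cast
    exact hlt
  rwa [one_div_mul_eq_div, lt_div_iff₀ (by exact_mod_cast hn)] at hmean

lemma frequently_exp_pow_lt_prod_of_lt_growthExponent {a : ℕ → ℝ} {c : ℝ} (ha : ∀ n, 0 < a n)
    (hc : c < growthExponent a) :
    ∃ᶠ n : ℕ in atTop, Real.exp c ^ n < ∏ k ∈ Finset.range n, a k := by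
  refine (frequently_mul_lt_sum_log_of_lt_growthExponent hc).mono fun n hn => ?_
  calc Real.exp c ^ n = Real.exp (c * n) := by rw [mul_comm, Real.exp_nat_mul]
    _ < Real.exp (∑ k ∈ Finset.range n, Real.log (a k)) := Real.exp_lt_exp.2 hn
    _ = ∏ k ∈ Finset.range n, a k := by simp only [Real.exp_sum, Real.exp_log (ha _)]

lemma exists_not_bddAbove_prod_mul_of_growthExponent_pos {a : ℕ → ℝ} (ha : ∀ n, 0 < a n)
    (hpos : 0 < growthExponent a) :
    ∃ θ ∈ Set.Ioo (0 : ℝ) 1,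
      ¬ BddAbove (Set.range fun n => ∏ k ∈ Finset.range n, θ * a k) := by
  obtain ⟨c, hc0, hc⟩ := EReal.lt_iff_exists_real_btwn.1 hpos
  replace hc0 : 0 < c := by exact_mod_cast hc0
  refine ⟨Real.exp (-(c / 2)), ⟨Real.exp_pos _, Real.exp_lt_one_iff.2 (by linarith)⟩, ?_⟩
  rintro ⟨C, hC⟩
  have hlarge : ∀ᶠ n : ℕ in atTop, C < Real.exp (c / 2) ^ n :=
    (tendsto_pow_atTop_atTop_of_one_lt (Real.one_lt_exp_iff.2 (half_pos hc0))).eventually_gt_atTop C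
  obtain ⟨n, hprod, hn⟩ :=
    ((frequently_exp_pow_lt_prod_of_lt_growthExponent ha hc).and_eventually hlarge).exists
  refine (hC ⟨n, rfl⟩).not_gt (hn.trans ?_)
  calc Real.exp (c / 2) ^ n = Real.exp (-(c / 2)) ^ n * Real.exp c ^ n := by
        rw [← mul_pow, ← Real.exp_add]; ring_nf
    _ < Real.exp (-(c / 2)) ^ n * ∏ k ∈ Finset.range n, a k := by gcongr
    _ = ∏ k ∈ Finset.range n, Real.exp (-(c / 2)) * a k := by
        rw [Finset.prod_mul_distrib, Finset.prod_const, Finset.card_range]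

lemma iterSeq_mem {X : Type*} {f : ℕ → X → X} {s : Set X} (hf : ∀ n, Set.MapsTo (f n) s s)
    {x : X} (hx : x ∈ s) (n : ℕ) : iterSeq f n x ∈ s := by
  induction n with
  | zero => exact hx
  | succ n ih => exact hf n ih

lemma stronglySensitiveWithinAt_of_expanding {X : Type*} [MetricSpace X] {f : ℕ → X → X}
    {s : Set X} {x : X} {d : ℝ} {b : ℕ → ℝ} (hf : ∀ n, Set.MapsTo (f n) s s) (hd : 0 < d)
    (hb : ∀ n, 0 ≤ b n)
    (hexp : ∀ n, ∀ y ∈ s, dist y (iterSeq f n x) < d →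
      b n * dist y (iterSeq f n x) ≤ dist (f n y) (f n (iterSeq f n x)))
    (hprod : ¬ BddAbove (Set.range fun n => ∏ k ∈ Finset.range n, b k)) :
    StronglySensitiveWithinAt f s x := by
  refine ⟨d / 2, half_pos hd, Metric.ball x d, Metric.ball_mem_nhds x hd,
    fun y hyd hys hyx => ?_⟩
  by_contra! hstay
  have hclose : ∀ n, dist (iterSeq f n y) (iterSeq f n x) < d := by
    intro n
    rcases n.eq_zero_or_pos with rfl | hn
    · exact hyd
    · exact (hstay n hn).trans_lt (half_lt_self hd)
  have hgrow : ∀ n, (∏ k ∈ Finset.range n, b k) * dist y x ≤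
      dist (iterSeq f n y) (iterSeq f n x) :=
    prod_range_mul_le_of_mul_le_succ (u := fun n => dist (iterSeq f n y) (iterSeq f n x)) hb
      fun n => hexp n _ (iterSeq_mem hf hys n) (hclose n)
  refine hprod ⟨d / dist y x, ?_⟩
  rintro _ ⟨n, rfl⟩
  exact (le_div_iff₀ (dist_pos.2 hyx)).2 ((hgrow n).trans (hclose n).le)

lemma sub_mul_norm_sub_le_of_hasFDerivWithinAt {E F : Type*} [NormedAddCommGroup E]
    [NormedSpace ℝ E] [NormedAddCommGroup F] [NormedSpace ℝ F] {g : E → F} {g' : E → E →L[ℝ] F}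
    {φ : E →L[ℝ] F} {s : Set E} {a ε : ℝ} (hs : Convex ℝ s)
    (hg : ∀ z ∈ s, HasFDerivWithinAt g (g' z) s z) (hφ : ∀ v, a * ‖v‖ ≤ ‖φ v‖)
    (hε : ∀ z ∈ s, ‖g' z - φ‖ ≤ ε) {x y : E} (hx : x ∈ s) (hy : y ∈ s) :
    (a - ε) * ‖y - x‖ ≤ ‖g y - g x‖ := by
  have happrox : ‖g y - g x - φ (y - x)‖ ≤ ε * ‖y - x‖ :=
    hs.norm_image_sub_le_of_norm_hasFDerivWithin_le' hg hε hx hy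
  linarith [hφ (y - x), norm_le_norm_add_norm_sub (g y - g x) (φ (y - x))]

theorem positive_lyapunov_exponent_implies_strong_sensitivity_general {E : Type*}
    [NormedAddCommGroup E] [NormedSpace ℝ E] {s : Set E} (hs : Convex ℝ s) {f : ℕ → E → E}
    {f' : ℕ → E → E →L[ℝ] E} (hmaps : ∀ n, Set.MapsTo (f n) s s)
    (hderiv : ∀ n, ∀ x ∈ s, HasFDerivWithinAt (f n) (f' n x) s x) {x0 : E} (hx0 : x0 ∈ s)
    (hec : ∀ ε > (0 : ℝ), ∃ δ > (0 : ℝ), ∀ n, ∀ y ∈ s, dist y (iterSeq f n x0) < δ →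
      dist (f' n y) (f' n (iterSeq f n x0)) < ε)
    {a : ℕ → ℝ} (ha : ∀ n v, a n * ‖v‖ ≤ ‖f' n (iterSeq f n x0) v‖)
    (hM : ∃ M > (0 : ℝ), ∀ n, M ≤ a n) (hpos : 0 < growthExponent a) :
    StronglySensitiveWithinAt f s x0 := by
  obtain ⟨M, hM0, hMa⟩ := hM
  have ha0 : ∀ n, 0 < a n := fun n => hM0.trans_le (hMa n)
  obtain ⟨θ, ⟨hθ0, hθ1⟩, hprod⟩ := exists_not_bddAbove_prod_mul_of_growthExponent_pos ha0 hpos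
  obtain ⟨d, hd0, hd⟩ := hec (M * (1 - θ)) (mul_pos hM0 (sub_pos.2 hθ1))
  refine stronglySensitiveWithinAt_of_expanding hmaps hd0 (fun n => (mul_pos hθ0 (ha0 n)).le)
    (fun n y hy hyd => ?_) hprod
  have hloss : θ * a n ≤ a n - M * (1 - θ) := by
    linarith [mul_le_mul_of_nonneg_right (hMa n) (sub_pos.2 hθ1).le]
  have hlocal := sub_mul_norm_sub_le_of_hasFDerivWithinAt
    (hs.inter (convex_ball (iterSeq f n x0) d))
    (fun z hz => (hderiv n z hz.1).mono Set.inter_subset_left) (ha n)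
    (fun z hz => (dist_eq_norm (f' n z) _).symm.trans_le (hd n z hz.1 hz.2).le)
    ⟨iterSeq_mem hmaps hx0 n, Metric.mem_ball_self hd0⟩ ⟨hy, hyd⟩
  simp only [dist_eq_norm]
  exact (mul_le_mul_of_nonneg_right hloss (norm_nonneg _)).trans hlocal

/-- Theorem 3.1: `I` a non-degenerate interval, `f n : I → I` C¹ maps with derivatives
`f' n`, `{f' n}` equi-continuous in `I`, `inf{|f_n'(x_k)| : n,k ≥ 0} > 0`.  If
`λ(x0) > 0`, then the system is strongly sensitive at `x0`. -/
theorem positive_lyapunov_exponent_implies_strong_sensitivity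
    (I : Set ℝ) (hIoc : I.OrdConnected) (hInd : ∃ p ∈ I, ∃ q ∈ I, p ≠ q)
    (f f' : ℕ → ℝ → ℝ)
    (hmaps : ∀ n, Set.MapsTo (f n) I I)
    (hderiv : ∀ n, ∀ x ∈ I, HasDerivWithinAt (f n) (f' n x) I x)
    (hcont : ∀ n, ContinuousOn (f' n) I)
    (x0 : ℝ) (hx0 : x0 ∈ I)
    -- {f_n'} is equi-continuous in I
    (hec : ∀ ε > (0:ℝ), ∃ δ > (0:ℝ), ∀ n : ℕ, ∀ x ∈ I, ∀ y ∈ I,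
      |x - y| < δ → |f' n x - f' n y| < ε)
    -- M := inf{ |f_n'(x_k)| : n, k ≥ 0 } > 0
    (hM : ∃ M > (0:ℝ), ∀ n k : ℕ, M ≤ |f' n (iterSeq f k x0)|)
    -- positive Lyapunov exponent at x0
    (hpos : 0 < lyapExp f f' x0) :
    -- strong sensitivity at x0
    ∃ δ > (0:ℝ), ∃ U ∈ 𝓝 x0, ∀ y0 ∈ U, y0 ∈ I → y0 ≠ x0 →
      ∃ N : ℕ, 0 < N ∧ δ < |iterSeq f N y0 - iterSeq f N x0| := by
  refine positive_lyapunov_exponent_implies_strong_sensitivity_general hIoc.convex hmaps hderiv hx0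
    (a := fun n => |f' n (iterSeq f n x0)|) (fun ε hε => ?_) (fun n v => by simp [mul_comm])
    (hM.imp fun M h => ⟨h.1, fun n => h.2 n n⟩) hpos
  obtain ⟨δ, hδ0, hδ⟩ := hec ε hε
  exact ⟨δ, hδ0, fun n y hy hyd =>
    ((ContinuousLinearMap.toSpanSingletonLIE ℝ ℝ).dist_map _ _).trans_lt
      (hδ n y hy _ (iterSeq_mem hmaps hx0 n) hyd)⟩
end

section
/- Let I be a non-degenerate, closed, and bounded interval, let f_n : I → I be a C² map for each n ≥ 0, and let x_0 ∈ I. Assume that the sequence of second derivatives {f_n″}_{n=0}^∞ is uniformly bounded on I, i.e., there exists M > 0 with |f_n″(x)| ≤ M for all x ∈ I and n ≥ 0. If −∞ < λ(x_0) < 0 and 2λ(x_0) < λ_0(x_0), then the system x_{n+1} = f_n(x_n) is exponentially asymptotically stable at x_0; that is, there exist positive constants δ, C, and μ such that |f_0^n(y_0) − f_0^n(x_0)| ≤ C·exp(−μn) for each n ≥ 0 and every y_0 ∈ I with |y_0 − x_0| < δ. -/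
open Filter Topology

/-- The Lyapunov exponent `λ(x0) := limsup (1/n) ∑_{k<n} ln|f_k'(x_k)|` (in the
extended reals), where `x_k = f_0^k(x0)` is the orbit of `x0`. -/
noncomputable def lyapExpSup (f f' : ℕ → ℝ → ℝ) (x0 : ℝ) : EReal :=
  Filter.limsup (fun n : ℕ => ((1 / (n:ℝ)) * ∑ k ∈ Finset.range n,
    Real.log |f' k (iterSeq f k x0)| : EReal)) Filter.atTop

/-- The lower Lyapunov exponent `λ₀(x0) := liminf (1/n) ∑_{k<n} ln|f_k'(x_k)|`. -/
noncomputable def lyapExpInf (f f' : ℕ → ℝ → ℝ) (x0 : ℝ) : EReal :=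
  Filter.liminf (fun n : ℕ => ((1 / (n:ℝ)) * ∑ k ∈ Finset.range n,
    Real.log |f' k (iterSeq f k x0)| : EReal)) Filter.atTop

/-!
Let `z_n = |y_n - x_n|` be the separation of two orbits and `S_n = ∑_{k<n} ln |f_k'(x_k)|`.
Taylor's formula gives `z_{n+1} ≤ |f_n'(x_n)| z_n + M z_n²`, so the normalised separation
`w_n = z_n e^{-S_n}` satisfies `w_{n+1} ≤ w_n + M e^{2 S_n - S_{n+1}} w_n²`. For `λ < α < 0` and
`2α < β < λ₀` the coefficients are eventually at most a multiple of `e^{(2α - β) n}`, hence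
summable. Consequently `w_n ≤ 2 w_0` for all `n` once `w_0` is small, and `e^{S_n}` is at most a
multiple of `e^{α n}`.
-/

/-- Exponential asymptotic stability at `x₀` of the non-autonomous system `x_{n+1} = f_n(x_n)`,
for perturbed initial points in the state space `s`. -/
def IsExponentiallyStableOn {X : Type*} [PseudoMetricSpace X] (f : ℕ → X → X) (s : Set X)
    (x₀ : X) : Prop :=
  ∃ δ > (0 : ℝ), ∃ C > (0 : ℝ), ∃ μ > (0 : ℝ), ∀ n : ℕ, ∀ y₀ ∈ s,
    dist y₀ x₀ < δ → dist (iterSeq f n y₀) (iterSeq f n x₀) ≤ C * Real.exp (-μ * n)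

lemma mapsTo_iterSeq {X : Type*} {f : ℕ → X → X} {s : Set X}
    (hmaps : ∀ n, Set.MapsTo (f n) s s) (n : ℕ) : Set.MapsTo (iterSeq f n) s s := by
  induction n with
  | zero => exact Set.mapsTo_id s
  | succ n ih => exact (hmaps n).comp ih

lemma le_two_mul_of_quadratic_recurrence {w c : ℕ → ℝ} (hw : ∀ n, 0 ≤ w n) (hc : ∀ n, 0 ≤ c n)
    (hrec : ∀ n, w (n + 1) ≤ w n + c n * w n ^ 2)
    (hsmall : ∀ n, 4 * w 0 * ∑ k ∈ Finset.range n, c k ≤ 1) (n : ℕ) : w n ≤ 2 * w 0 := by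
  have two_mul_bound {n : ℕ} (h : w n ≤ w 0 + 4 * w 0 ^ 2 * ∑ k ∈ Finset.range n, c k) :
      w n ≤ 2 * w 0 := by
    linarith [mul_le_mul_of_nonneg_left (hsmall n) (hw 0)]
  refine two_mul_bound ?_
  induction n with
  | zero => simp
  | succ n ih =>
    calc w (n + 1) ≤ w n + c n * w n ^ 2 := hrec n
      _ ≤ (w 0 + 4 * w 0 ^ 2 * ∑ k ∈ Finset.range n, c k) + c n * (2 * w 0) ^ 2 := by
        gcongr
        exacts [hc n, hw n, two_mul_bound ih]
      _ = w 0 + 4 * w 0 ^ 2 * ∑ k ∈ Finset.range (n + 1), c k := by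
        rw [Finset.sum_range_succ]; ring

lemma le_two_mul_exp_sum_of_quadratic_recurrence {z u : ℕ → ℝ} {M : ℝ} (hM : 0 ≤ M)
    (hz : ∀ n, 0 ≤ z n) (hrec : ∀ n, z (n + 1) ≤ Real.exp (u n) * z n + M * z n ^ 2)
    (hsmall : ∀ n, 4 * z 0 *
      ∑ k ∈ Finset.range n, M * Real.exp (∑ i ∈ Finset.range k, u i - u k) ≤ 1) (n : ℕ) :
    z n ≤ 2 * z 0 * Real.exp (∑ i ∈ Finset.range n, u i) := by
  let w : ℕ → ℝ := fun n => z n * Real.exp (-∑ i ∈ Finset.range n, u i)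
  have hw0 : w 0 = z 0 := by simp [w]
  have hwrec (n : ℕ) :
      w (n + 1) ≤ w n + M * Real.exp (∑ i ∈ Finset.range n, u i - u n) * w n ^ 2 :=
    calc w (n + 1)
        ≤ (Real.exp (u n) * z n + M * z n ^ 2) *
            Real.exp (-∑ i ∈ Finset.range (n + 1), u i) :=
          mul_le_mul_of_nonneg_right (hrec n) (Real.exp_pos _).le
      _ = w n + M * Real.exp (∑ i ∈ Finset.range n, u i - u n) * w n ^ 2 := by
          simp only [w, Finset.sum_range_succ, neg_add, sub_eq_add_neg, Real.exp_add, Real.exp_neg]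
          field_simp
  have hwn : w n ≤ 2 * w 0 :=
    le_two_mul_of_quadratic_recurrence (w := w) (fun k => mul_nonneg (hz k) (Real.exp_pos _).le)
      (fun k => mul_nonneg hM (Real.exp_pos _).le) hwrec (by rwa [hw0]) n
  calc z n = w n * Real.exp (∑ i ∈ Finset.range n, u i) := by
        simp only [w, mul_assoc, ← Real.exp_add, neg_add_cancel, Real.exp_zero, mul_one]
    _ ≤ 2 * z 0 * Real.exp (∑ i ∈ Finset.range n, u i) := by
        rw [← hw0]
        gcongr

lemma exists_forall_exp_le_mul_exp {S : ℕ → ℝ} {α : ℝ} (hα : ∀ᶠ n : ℕ in atTop, S n ≤ α * n) :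
    ∃ K > 0, ∀ n : ℕ, Real.exp (S n) ≤ K * Real.exp (α * n) := by
  have hbdd : IsBoundedUnder (· ≤ ·) atTop fun n : ℕ => S n - α * n :=
    ⟨0, eventually_map.2 (hα.mono fun _ hn => sub_nonpos.2 hn)⟩
  obtain ⟨K, hK⟩ := hbdd.bddAbove_range
  refine ⟨Real.exp K, Real.exp_pos K, fun n => ?_⟩
  rw [← Real.exp_add, Real.exp_le_exp, ← sub_le_iff_le_add]
  exact hK (Set.mem_range_self n)

lemma summable_exp_sum_sub {u : ℕ → ℝ} {α β : ℝ}
    (hα : ∀ᶠ n : ℕ in atTop, ∑ i ∈ Finset.range n, u i ≤ α * n)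
    (hβ : ∀ᶠ n : ℕ in atTop, β * n ≤ ∑ i ∈ Finset.range n, u i) (hαβ : 2 * α < β) :
    Summable fun n => Real.exp (∑ i ∈ Finset.range n, u i - u n) := by
  have hgeom : Summable fun n : ℕ => Real.exp (-β) * Real.exp (n * (2 * α - β)) :=
    (Real.summable_exp_nat_mul_iff.2 (sub_neg.2 hαβ)).mul_left _
  refine hgeom.of_norm_bounded_eventually_nat ?_
  filter_upwards [hα, (tendsto_add_atTop_nat 1).eventually hβ] with n hupper hlower
  rw [Real.norm_of_nonneg (Real.exp_pos _).le, ← Real.exp_add, Real.exp_le_exp]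
  rw [Finset.sum_range_succ] at hlower
  push_cast at hlower
  linarith

theorem isExponentiallyStableOn_of_dist_le_quadratic {X : Type*} [PseudoMetricSpace X]
    {f : ℕ → X → X} {s : Set X} {x₀ : X} {u : ℕ → ℝ} {M α β : ℝ} (hM : 0 ≤ M)
    (hmaps : ∀ n, Set.MapsTo (f n) s s)
    (hstep : ∀ n, ∀ y ∈ s, dist (f n y) (f n (iterSeq f n x₀)) ≤
      Real.exp (u n) * dist y (iterSeq f n x₀) + M * dist y (iterSeq f n x₀) ^ 2)
    (hα : ∀ᶠ n : ℕ in atTop, ∑ i ∈ Finset.range n, u i ≤ α * n)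
    (hβ : ∀ᶠ n : ℕ in atTop, β * n ≤ ∑ i ∈ Finset.range n, u i)
    (hα_neg : α < 0) (hαβ : 2 * α < β) : IsExponentiallyStableOn f s x₀ := by
  let c : ℕ → ℝ := fun k => M * Real.exp (∑ i ∈ Finset.range k, u i - u k)
  have hc_nonneg (k : ℕ) : 0 ≤ c k := mul_nonneg hM (Real.exp_pos _).le
  have hc_summable : Summable c := (summable_exp_sum_sub hα hβ hαβ).mul_left M
  have hB : 0 ≤ ∑' k, c k := tsum_nonneg hc_nonneg
  obtain ⟨K, hK_pos, hK⟩ := exists_forall_exp_le_mul_exp hα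
  set δ : ℝ := 1 / (4 * (∑' k, c k + 1)) with hδ
  have hδ_pos : 0 < δ := by positivity
  refine ⟨δ, hδ_pos, 2 * δ * K, by positivity, -α, neg_pos.2 hα_neg, fun n y₀ hy₀ hdist => ?_⟩
  have hsmall (n : ℕ) : 4 * dist y₀ x₀ * ∑ k ∈ Finset.range n, c k ≤ 1 :=
    calc 4 * dist y₀ x₀ * ∑ k ∈ Finset.range n, c k ≤ 4 * δ * (∑' k, c k + 1) := by
          gcongr
          linarith [hc_summable.sum_le_tsum (Finset.range n) fun k _ => hc_nonneg k]
      _ = 1 := by rw [hδ]; field_simp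
  calc dist (iterSeq f n y₀) (iterSeq f n x₀)
      ≤ 2 * dist y₀ x₀ * Real.exp (∑ i ∈ Finset.range n, u i) :=
        le_two_mul_exp_sum_of_quadratic_recurrence
          (z := fun n => dist (iterSeq f n y₀) (iterSeq f n x₀)) hM (fun _ => dist_nonneg)
          (fun n => hstep n _ (mapsTo_iterSeq hmaps n hy₀)) hsmall n
    _ ≤ 2 * δ * (K * Real.exp (α * n)) := by
        gcongr
        exact hK n
    _ = 2 * δ * K * Real.exp (- -α * n) := by rw [neg_neg]; ring

lemma dist_image_le_of_lipschitzOnWith_deriv {𝕜 F : Type*} [RCLike 𝕜] [NormedAddCommGroup F]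
    [NormedSpace 𝕜 F] {g g' : 𝕜 → F} {s : Set 𝕜} {M : NNReal} {x y : 𝕜} (hs : Convex ℝ s)
    (hg : ∀ t ∈ s, HasDerivWithinAt g (g' t) s t) (hg' : LipschitzOnWith M g' s)
    (hx : x ∈ s) (hy : y ∈ s) :
    dist (g y) (g x) ≤ ‖g' x‖ * dist y x + M * dist y x ^ 2 := by
  have hsub : segment ℝ x y ⊆ s := hs.segment_subset hx hy
  have hderiv : ∀ t ∈ segment ℝ x y,
      HasDerivWithinAt (fun t => g t - (t - x) • g' x) (g' t - g' x) (segment ℝ x y) t := by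
    intro t ht
    have hlinear := ((hasDerivWithinAt_id t (segment ℝ x y)).sub_const x).smul_const (g' x)
    rw [one_smul] at hlinear
    exact ((hg t (hsub ht)).mono hsub).sub hlinear
  have hbound : ∀ t ∈ segment ℝ x y, ‖g' t - g' x‖ ≤ M * ‖y - x‖ := fun t ht =>
    (hg'.norm_sub_le (hsub ht) hx).trans <| by
      gcongr
      exact norm_sub_le_of_mem_segment ht
  have hremainder : ‖g y - g x - (y - x) • g' x‖ ≤ M * ‖y - x‖ * ‖y - x‖ := by
    simpa [sub_right_comm] using (convex_segment x y).norm_image_sub_le_of_norm_hasDerivWithin_le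
      hderiv hbound (left_mem_segment ℝ x y) (right_mem_segment ℝ x y)
  rw [dist_eq_norm, dist_eq_norm]
  calc ‖g y - g x‖
      ≤ ‖(y - x) • g' x‖ + ‖g y - g x - (y - x) • g' x‖ := norm_le_norm_add_norm_sub' _ _
    _ ≤ ‖y - x‖ * ‖g' x‖ + M * ‖y - x‖ * ‖y - x‖ := add_le_add (norm_smul_le _ _) hremainder
    _ = ‖g' x‖ * ‖y - x‖ + M * ‖y - x‖ ^ 2 := by ring

section LyapunovExponent

variable {f f' : ℕ → ℝ → ℝ} {x₀ : ℝ}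

lemma ereal_one_div_mul_coe (x y : ℝ) : (1 / (x : EReal)) * y = (y / x : ℝ) := by
  rw [← EReal.coe_one, ← EReal.coe_div, ← EReal.coe_mul, one_div_mul_eq_div]

lemma eventually_sum_log_deriv_lt {α : ℝ} (h : lyapExpSup f f' x₀ < α) :
    ∀ᶠ n : ℕ in atTop,
      ∑ k ∈ Finset.range n, Real.log |f' k (iterSeq f k x₀)| < α * n := by
  filter_upwards [eventually_lt_of_limsup_lt h, eventually_gt_atTop 0] with n hn hn_pos
  rwa [ereal_one_div_mul_coe, EReal.coe_lt_coe_iff, div_lt_iff₀ (Nat.cast_pos.2 hn_pos)] at hn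

lemma eventually_lt_sum_log_deriv {β : ℝ} (h : β < lyapExpInf f f' x₀) :
    ∀ᶠ n : ℕ in atTop,
      β * n < ∑ k ∈ Finset.range n, Real.log |f' k (iterSeq f k x₀)| := by
  filter_upwards [eventually_lt_of_lt_liminf h, eventually_gt_atTop 0] with n hn hn_pos
  rwa [ereal_one_div_mul_coe, EReal.coe_lt_coe_iff, lt_div_iff₀ (Nat.cast_pos.2 hn_pos)] at hn

end LyapunovExponent

lemma exists_real_between_of_two_mul_lt {a b : EReal} (ha : a < 0) (hab : 2 * a < b) :
    ∃ α β : ℝ, a < α ∧ α < 0 ∧ 2 * α < β ∧ β < b := by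
  obtain ⟨β, haβ, hβb⟩ := EReal.lt_iff_exists_real_btwn.1 hab
  have ha_half : a < (β / 2 : ℝ) := by
    rw [EReal.coe_div]
    refine (EReal.lt_div_iff (by norm_num) (EReal.coe_ne_top 2)).2 ?_
    rwa [mul_comm]
  obtain ⟨α, haα, hα⟩ := EReal.lt_iff_exists_real_btwn.1 (lt_min ha ha_half)
  have hα_neg : α < 0 := EReal.coe_lt_coe_iff.1 (hα.trans_le (min_le_left _ _))
  have hα_half : α < β / 2 := EReal.coe_lt_coe_iff.1 (hα.trans_le (min_le_right _ _))
  exact ⟨α, β, haα, hα_neg, by linarith, hβb⟩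

theorem negative_lyapunov_exponent_implies_exponential_stability_general
    {s : Set ℝ} (hs : Convex ℝ s) {f f' : ℕ → ℝ → ℝ} (hmaps : ∀ n, Set.MapsTo (f n) s s)
    (hderiv : ∀ n, ∀ x ∈ s, HasDerivWithinAt (f n) (f' n x) s x)
    {M : NNReal} (hlip : ∀ n, LipschitzOnWith M (f' n) s) {x₀ : ℝ} (hx₀ : x₀ ∈ s)
    (hneg : lyapExpSup f f' x₀ < 0) (hgap : 2 * lyapExpSup f f' x₀ < lyapExpInf f f' x₀) :
    IsExponentiallyStableOn f s x₀ := by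
  obtain ⟨α, β, hα, hα_neg, hαβ, hβ⟩ := exists_real_between_of_two_mul_lt hneg hgap
  refine isExponentiallyStableOn_of_dist_le_quadratic M.coe_nonneg hmaps (fun n y hy => ?_)
    ((eventually_sum_log_deriv_lt hα).mono fun _ => le_of_lt)
    ((eventually_lt_sum_log_deriv hβ).mono fun _ => le_of_lt) hα_neg hαβ
  refine (dist_image_le_of_lipschitzOnWith_deriv hs (hderiv n) (hlip n)
    (mapsTo_iterSeq hmaps n hx₀) hy).trans ?_
  gcongr
  -- Only an inequality is available when the derivative vanishes, since then `Real.log 0 = 0`.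
  exact Real.le_exp_log _

/-- Theorem 4.1: `I = [a,b]` a non-degenerate closed bounded interval, `f n : I → I`
C² maps with first and second derivatives `f' n`, `f'' n`, and `{f'' n}` uniformly
bounded on `I`.  If `-∞ < λ(x0) < 0` and `2λ(x0) < λ₀(x0)`, then the system is
exponentially asymptotically stable at `x0`. -/
theorem negative_lyapunov_exponent_implies_exponential_stability
    (a b : ℝ) (hab : a < b) (f f' f'' : ℕ → ℝ → ℝ)
    (hmaps : ∀ n, Set.MapsTo (f n) (Set.Icc a b) (Set.Icc a b))
    (hderiv : ∀ n, ∀ x ∈ Set.Icc a b, HasDerivWithinAt (f n) (f' n x) (Set.Icc a b) x)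
    (hderiv2 : ∀ n, ∀ x ∈ Set.Icc a b, HasDerivWithinAt (f' n) (f'' n x) (Set.Icc a b) x)
    (hcont2 : ∀ n, ContinuousOn (f'' n) (Set.Icc a b))
    -- {f_n''} is uniformly bounded in I
    (M : ℝ) (hM : 0 < M) (hbd : ∀ n : ℕ, ∀ x ∈ Set.Icc a b, |f'' n x| ≤ M)
    (x0 : ℝ) (hx0 : x0 ∈ Set.Icc a b)
    -- -∞ < λ(x0) < 0
    (hgt : ⊥ < lyapExpSup f f' x0) (hlt : lyapExpSup f f' x0 < 0)
    -- 2λ(x0) < λ₀(x0)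
    (h2 : 2 * lyapExpSup f f' x0 < lyapExpInf f f' x0) :
    -- exponential asymptotical stability at x0
    ∃ δ > (0:ℝ), ∃ C > (0:ℝ), ∃ μ > (0:ℝ), ∀ n : ℕ, ∀ y0 ∈ Set.Icc a b,
      |y0 - x0| < δ → |iterSeq f n y0 - iterSeq f n x0| ≤ C * Real.exp (-μ * n) :=
  negative_lyapunov_exponent_implies_exponential_stability_general (convex_Icc a b) hmaps hderiv
    (M := ⟨M, hM.le⟩) (fun n => (convex_Icc a b).lipschitzOnWith_of_nnnorm_hasDerivWithin_le
      (hderiv2 n) (hbd n)) hx0 hlt h2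
end

section
/- Consider the non-autonomous logistic system x_{n+1} = r_n x_n(1 − x_n) on I = [0,1], governed by the maps f_n(x) = r_n x(1 − x). If there exists a constant L > 1 such that L ≤ r_n ≤ 4 for all n ≥ 0, then the system is strongly sensitive at the fixed point 0; that is, there exist δ > 0 and a neighborhood U of 0 in [0,1] such that for every y_0 ∈ U with y_0 ≠ 0 there is a positive integer N with |f_0^N(y_0)| > δ, where f_0^N := f_{N−1} ∘ ⋯ ∘ f_0. -/
open Filter Topology

/-!
If near the orbit of `x₀` every map of the system expands distances to that orbit by a factor
`c > 1`, then an orbit staying within `δ` of it forever would drift away from it geometrically, a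
contradiction; so every nearby point other than `x₀` eventually leaves the `δ`-tube.
For the logistic maps and `x₀ = 0` such an expansion comes from
`‖a * x * (1 - x)‖ ≥ ‖a‖ * (1 - ‖x‖) * ‖x‖`: as `‖a‖ ≥ L > 1`, the factor `L * (1 - δ)` exceeds `1`
for small `δ`.
-/

section Metric

variable {X : Type*}

theorem isFixedPt_iterSeq {f : ℕ → X → X} {p : X} (hf : ∀ n, Function.IsFixedPt (f n) p) (n : ℕ) :
    Function.IsFixedPt (iterSeq f n) p := by
  induction n with
  | zero => exact Function.isFixedPt_id p
  | succ n ih => exact (hf n).comp ih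

/-- Strong sensitivity of a non-autonomous system at `x₀`: a single `δ` separates the orbit of `x₀`
from the orbit of every other nearby point. It is meant for non-isolated `x₀`, since at an isolated
point it holds vacuously. -/
def StronglySensitiveAt [PseudoMetricSpace X] (f : ℕ → X → X) (x₀ : X) : Prop :=
  ∃ δ > (0 : ℝ), ∃ U ∈ 𝓝 x₀, ∀ y ∈ U, y ≠ x₀ →
    ∃ N : ℕ, 0 < N ∧ δ < dist (iterSeq f N y) (iterSeq f N x₀)

/-- Uniform expansion along the orbit of `x₀`: at every time `n`, the map `f n` stretches distances
from the current point of the orbit by at least the factor `c`, within radius `δ`. -/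
def ExpandsAlongOrbit [PseudoMetricSpace X] (f : ℕ → X → X) (x₀ : X) (c δ : ℝ) : Prop :=
  ∀ n x, dist x (iterSeq f n x₀) ≤ δ →
    c * dist x (iterSeq f n x₀) ≤ dist (f n x) (f n (iterSeq f n x₀))

theorem ExpandsAlongOrbit.pow_mul_dist_le [PseudoMetricSpace X] {f : ℕ → X → X} {x₀ y : X}
    {c δ : ℝ} (hf : ExpandsAlongOrbit f x₀ c δ) (hc : 0 ≤ c) {n : ℕ}
    (hy : ∀ k < n, dist (iterSeq f k y) (iterSeq f k x₀) ≤ δ) :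
    c ^ n * dist y x₀ ≤ dist (iterSeq f n y) (iterSeq f n x₀) := by
  induction n with
  | zero => simp [iterSeq]
  | succ n ih =>
    calc c ^ (n + 1) * dist y x₀
        = c * (c ^ n * dist y x₀) := by ring
      _ ≤ c * dist (iterSeq f n y) (iterSeq f n x₀) := by
        gcongr
        exact ih fun k hk => hy k (hk.trans n.lt_succ_self)
      _ ≤ dist (iterSeq f (n + 1) y) (iterSeq f (n + 1) x₀) := hf n _ (hy n n.lt_succ_self)

theorem ExpandsAlongOrbit.stronglySensitiveAt [MetricSpace X] {f : ℕ → X → X} {x₀ : X} {c δ : ℝ}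
    (hf : ExpandsAlongOrbit f x₀ c δ) (hc : 1 < c) (hδ : 0 < δ) : StronglySensitiveAt f x₀ := by
  refine ⟨δ, hδ, Metric.closedBall x₀ δ, Metric.closedBall_mem_nhds x₀ hδ, fun y hyU hne => ?_⟩
  by_contra! hle
  have hclose (k : ℕ) : dist (iterSeq f k y) (iterSeq f k x₀) ≤ δ :=
    k.eq_zero_or_pos.elim (fun hk => hk ▸ hyU) (hle k)
  obtain ⟨n, hn⟩ := pow_unbounded_of_one_lt (δ / dist y x₀) hc
  have hescape : δ < c ^ n * dist y x₀ := (div_lt_iff₀ (dist_pos.mpr hne)).mp hn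
  have hgrowth := hf.pow_mul_dist_le (zero_le_one.trans hc.le) (n := n) fun k _ => hclose k
  exact (hescape.trans_le (hgrowth.trans (hclose n))).false

end Metric

section Logistic

theorem iterSeq_logistic_zero {R : Type*} [Ring R] (r : ℕ → R) (n : ℕ) :
    iterSeq (fun n x => r n * x * (1 - x)) n 0 = 0 :=
  isFixedPt_iterSeq (fun n => by simp [Function.IsFixedPt]) n

variable {R : Type*} [NormedRing R] [NormOneClass R] [NormMulClass R]

theorem norm_mul_one_sub_norm_mul_norm_le (a x : R) :
    ‖a‖ * (1 - ‖x‖) * ‖x‖ ≤ ‖a * x * (1 - x)‖ := by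
  have hsub : 1 - ‖x‖ ≤ ‖1 - x‖ := by simpa only [norm_one] using norm_sub_norm_le 1 x
  calc ‖a‖ * (1 - ‖x‖) * ‖x‖
      = ‖a‖ * ‖x‖ * (1 - ‖x‖) := by ring
    _ ≤ ‖a‖ * ‖x‖ * ‖1 - x‖ := by gcongr
    _ = ‖a * x * (1 - x)‖ := by simp only [norm_mul]

theorem expandsAlongOrbit_logistic_zero {r : ℕ → R} {L δ : ℝ}
    (hr : ∀ n, L ≤ ‖r n‖) (hδ : δ ≤ 1) :
    ExpandsAlongOrbit (fun n x => r n * x * (1 - x)) 0 (L * (1 - δ)) δ := by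
  intro n x hx
  simp only [iterSeq_logistic_zero, dist_zero_right, mul_zero, zero_mul] at hx ⊢
  have hfactor : L * (1 - δ) ≤ ‖r n‖ * (1 - ‖x‖) :=
    mul_le_mul (hr n) (sub_le_sub_left hx 1) (sub_nonneg.mpr hδ) (norm_nonneg _)
  calc L * (1 - δ) * ‖x‖
      ≤ ‖r n‖ * (1 - ‖x‖) * ‖x‖ := by gcongr
    _ ≤ ‖r n * x * (1 - x)‖ := norm_mul_one_sub_norm_mul_norm_le (r n) x

theorem stronglySensitiveAt_logistic_zero {r : ℕ → R} {L : ℝ} (hL : 1 < L)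
    (hr : ∀ n, L ≤ ‖r n‖) : StronglySensitiveAt (fun n x => r n * x * (1 - x)) 0 := by
  have hL₀ : 0 < L := zero_lt_one.trans hL
  have hinv : L⁻¹ < 1 := inv_lt_one_of_one_lt₀ hL
  have hinv₀ : 0 < L⁻¹ := inv_pos.mpr hL₀
  -- Half of `1 - L⁻¹`, the radius at which the expansion factor `L * (1 - δ)` drops to `1`.
  obtain ⟨δ, hδ⟩ : ∃ δ, δ = (1 - L⁻¹) / 2 := ⟨_, rfl⟩
  have hfactor : L * (1 - δ) = (L + 1) / 2 := by
    rw [hδ]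
    field_simp
    ring
  exact (expandsAlongOrbit_logistic_zero hr (by linarith)).stronglySensitiveAt
    (by linarith) (by linarith)

theorem logistic_strongly_sensitive_at_zero_general (r : ℕ → R) (L : ℝ) (hL : 1 < L)
    (hr : ∀ n, L ≤ ‖r n‖) :
    ∃ δ > (0 : ℝ), ∃ U ∈ 𝓝 (0 : R), ∀ y ∈ U, y ≠ 0 →
      ∃ N : ℕ, 0 < N ∧ δ < ‖iterSeq (fun n x => r n * x * (1 - x)) N y‖ := by
  simpa only [StronglySensitiveAt, iterSeq_logistic_zero, dist_zero_right] using
    stronglySensitiveAt_logistic_zero hL hr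

end Logistic

/-- The non-autonomous logistic system `x_{n+1} = r_n x_n (1 - x_n)` on `[0,1]`:
if `L ≤ r_n ≤ 4` for all `n` with a constant `L > 1`, then the system is strongly
sensitive at the fixed point `0`. -/
theorem logistic_strongly_sensitive_at_zero (r : ℕ → ℝ) (L : ℝ) (hL : 1 < L)
    (hr : ∀ n : ℕ, L ≤ r n ∧ r n ≤ 4) :
    ∃ δ > (0:ℝ), ∃ U ∈ 𝓝 (0:ℝ), ∀ y0 ∈ U ∩ Set.Icc (0:ℝ) 1, y0 ≠ 0 →
      ∃ N : ℕ, 0 < N ∧ δ < |iterSeq (fun n x => r n * x * (1 - x)) N y0| := by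
  obtain ⟨δ, hδ, U, hU, hsens⟩ := logistic_strongly_sensitive_at_zero_general r L hL
    fun n => (hr n).1.trans (le_abs_self (r n))
  exact ⟨δ, hδ, U, hU, fun y hy => hsens y hy.1⟩
end
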